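/- For every rooted PTC instance there exist a point p_e ∈ ℝ³ for each edge e ∈ E and an axis-parallel box R_j ⊆ ℝ³ (a product of three intervals) for each segment j ∈ S, such that for all j ∈ S and e ∈ E, segment j covers edge e in the PTC instance if and only if p_e ∈ R_j. Hence priority tree cover is a special case of the problem of covering points by axis-parallel rectangles in 3 dimensions. -/

import Mathlib

/-!
The tree is drawn as a laminar family of half-open real intervals `[a w, b w)`, arranged so that
`w` is an ancestor of `x` exactly when `a x ∈ [a w, b w)` (`exists_ancestor_intervals`). Such a
drawing is built one vertex at a time: a new child of `p` receives a tiny interval placed just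
to the right of `a p`, before the next endpoint already in use (`exists_intervals_insert`).

If `v` is an ancestor of `u`, the ancestors of `u` form a chain, so `e` lies on the `u`–`v` path
iff `e` is an ancestor of `u` lying strictly below `v`, which in the drawing says
`a v < a e ≤ a u` and `a u < b e`. The point of `e` is therefore `(a e, b e, dem e)`, and the box
of segment `j` is `(a v, a u] × (a u, ∞) × (-∞, sup j]`.
-/

/-- `OnChain parent x w`: vertex `w` lies on the chain from `x` up to the root of a rooted
tree given by its parent map (i.e. `w` is obtained from `x` by iterating `parent`). -/
def OnChain {V : Type*} (parent : V → V) (x w : V) : Prop :=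
  ∃ k : ℕ, parent^[k] x = w

/-- In a rooted tree given by a parent map with root `root`, each edge is identified with
its lower endpoint, a vertex `≠ root`. Segment `j` runs from `u j` up to its ancestor `v j`
and has priority supply `sup j`; it covers edge `e` (of priority demand `dem e`) iff `e`
lies on the `u j`–`v j` path and `sup j ≥ dem e`. -/
def TreeCovers {V ι : Type*} {root : V} (parent : V → V) (u v : ι → V) (sup : ι → ℕ)
    (dem : {w : V // w ≠ root} → ℕ) (j : ι) (e : {w : V // w ≠ root}) : Prop :=
  OnChain parent (u j) e.1 ∧ ¬ OnChain parent (v j) e.1 ∧ dem e ≤ sup j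

/-- `P` is the edge set of a path in the tree: the symmetric difference of the root-chains
of two vertices `x` and `y` (the edge set of the unique `x`–`y` path). -/
def IsPathEdgeSet {V : Type*} (parent : V → V) (root : V)
    (P : Set {w : V // w ≠ root}) : Prop :=
  ∃ x y : V, P = {e | (OnChain parent x e.1 ∧ ¬ OnChain parent y e.1) ∨
                      (OnChain parent y e.1 ∧ ¬ OnChain parent x e.1)}

open scoped Classical

/-- The real intervals `[a w, b w)`, for `w ∈ A`, encode the ancestor relation of the tree on `A`:
`w` is an ancestor of `x` iff the left endpoint of `x` lies in the interval of `w`. -/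
def EncodesAncestors {V : Type*} (parent : V → V) (A : Set V) (a b : V → ℝ) : Prop :=
  ∀ x ∈ A, ∀ w ∈ A, OnChain parent x w ↔ a w ≤ a x ∧ a x < b w

theorem OnChain.refl {V : Type*} (parent : V → V) (x : V) : OnChain parent x x := ⟨0, rfl⟩

theorem onChain_iff_eq_or_parent {V : Type*} (parent : V → V) (x w : V) :
    OnChain parent x w ↔ w = x ∨ OnChain parent (parent x) w := by
  constructor
  · rintro ⟨_ | k, hk⟩
    · exact Or.inl hk.symm
    · exact Or.inr ⟨k, hk⟩
  · rintro (rfl | ⟨k, hk⟩)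
    · exact OnChain.refl _ _
    · exact ⟨k + 1, hk⟩

theorem OnChain.mem_of_closed {V : Type*} {parent : V → V} {A : Set V}
    (hA : ∀ x ∈ A, parent x ∈ A) {x w : V} (hx : x ∈ A) (h : OnChain parent x w) : w ∈ A := by
  obtain ⟨k, rfl⟩ := h
  induction k generalizing x with
  | zero => exact hx
  | succ k ih => exact ih (hA x hx)

/-- The ancestors of a vertex form a chain. -/
theorem OnChain.total {V : Type*} {parent : V → V} {x y z : V}
    (hy : OnChain parent x y) (hz : OnChain parent x z) :
    OnChain parent y z ∨ OnChain parent z y := by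
  obtain ⟨i, rfl⟩ := hy
  obtain ⟨k, rfl⟩ := hz
  rcases le_total i k with h | h
  · exact Or.inl ⟨k - i, by rw [← Function.iterate_add_apply, Nat.sub_add_cancel h]⟩
  · exact Or.inr ⟨i - k, by rw [← Function.iterate_add_apply, Nat.sub_add_cancel h]⟩

/-- An encoding of a parent-closed set extends to one further vertex whose parent is in the set. -/
theorem exists_intervals_insert {V : Type*} [Finite V] {parent : V → V} {A : Set V}
    (hA : ∀ y ∈ A, parent y ∈ A) {x : V} (hx : x ∉ A) (hp : parent x ∈ A) {a b : V → ℝ}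
    (h : EncodesAncestors parent A a b) :
    ∃ a' b', EncodesAncestors parent (insert x A) a' b' := by
  -- `c` is so close to `a (parent x)` that no endpoint lies in `(a (parent x), c]`.
  obtain ⟨c, hc, hpc⟩ : ∃ c, (∀ w, (a (parent x) < a w → c < a w) ∧
      (a (parent x) < b w → c < b w)) ∧ a (parent x) < c := by
    have key : ∀ t : ℝ, ∀ᶠ c in nhdsWithin (a (parent x)) (Set.Ioi (a (parent x))),
        a (parent x) < t → c < t := by
      intro t
      by_cases ht : a (parent x) < t
      · filter_upwards [Ioo_mem_nhdsGT ht] with c hc _ using hc.2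
      · exact Filter.Eventually.of_forall fun c h' => absurd h' ht
    exact ((Filter.eventually_all.2 fun w => (key (a w)).and (key (b w))).and
      self_mem_nhdsWithin).exists
  obtain ⟨m, hpm, hmc⟩ := exists_between hpc
  refine ⟨Function.update a x m, Function.update b x c, ?_⟩
  intro y hy w hw
  rcases hy with rfl | hy <;> rcases hw with rfl | hw
  · simp [OnChain.refl, hmc]
  · have hwy : w ≠ y := fun e => hx (e ▸ hw)
    rw [onChain_iff_eq_or_parent, or_iff_right hwy, h _ hp w hw]
    simp only [Function.update_self, Function.update_of_ne hwy]
    have h1 := (hc w).1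
    have h2 := (hc w).2
    constructor
    · rintro ⟨h3, h4⟩
      exact ⟨h3.trans hpm.le, hmc.trans (h2 h4)⟩
    · rintro ⟨h3, h4⟩
      exact ⟨not_lt.1 fun h5 => absurd (h1 h5) (by linarith), hpm.trans h4⟩
  · have hyw : y ≠ w := fun e => hx (e ▸ hy)
    simp only [Function.update_self, Function.update_of_ne hyw]
    constructor
    · exact fun h' => absurd (h'.mem_of_closed hA hy) hx
    · rintro ⟨h3, h4⟩
      exact absurd ((hc y).1 (hpm.trans_le h3)) h4.not_gt
  · have hyx : y ≠ x := fun e => hx (e ▸ hy)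
    have hwx : w ≠ x := fun e => hx (e ▸ hw)
    simp only [Function.update_of_ne hyx, Function.update_of_ne hwx]
    exact h y hy w hw

/-- The ancestor relation of a finite rooted tree is encoded by a family of real intervals. -/
theorem exists_ancestor_intervals {V : Type*} [Finite V] {root : V} {parent : V → V}
    (hroot : parent root = root) (hreach : ∀ w : V, OnChain parent w root) :
    ∃ a b, EncodesAncestors parent Set.univ a b := by
  let good : Set (Set V) := {A | root ∈ A ∧ (∀ x ∈ A, parent x ∈ A) ∧
    ∃ a b, EncodesAncestors parent A a b}
  have hgood : {root} ∈ good := by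
    refine ⟨rfl, ?_, fun _ => 0, fun _ => 1, ?_⟩
    · rintro x rfl
      exact hroot
    · rintro x rfl w rfl
      simp [OnChain.refl]
  obtain ⟨A, hA⟩ := (Set.toFinite good).exists_maximal ⟨_, hgood⟩
  obtain ⟨hrA, hcl, a, b, hab⟩ := hA.prop
  suffices hAu : A = Set.univ from ⟨a, b, hAu ▸ hab⟩
  by_contra hne
  obtain ⟨y, hy⟩ := (Set.ne_univ_iff_exists_notMem A).1 hne
  -- The chain from `y` to the root enters `A`, and its last vertex outside `A` can be added.
  obtain ⟨x, hx, hp⟩ : ∃ x ∉ A, parent x ∈ A := by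
    by_contra! hno
    exact (OnChain.mem_of_closed (A := Aᶜ) hno hy (hreach y)) hrA
  have hins : insert x A ∈ good := by
    refine ⟨Or.inr hrA, ?_, exists_intervals_insert hcl hx hp hab⟩
    rintro z (rfl | hz)
    · exact Or.inr hp
    · exact Or.inr (hcl z hz)
  exact hx (hA.le_of_ge hins (Set.subset_insert x A) (Set.mem_insert x A))

/-- In an interval encoding, the path from `u` up to its ancestor `v` consists of the edges `e`
with `a v < a e ≤ a u < b e`. -/
theorem EncodesAncestors.onPath_iff {V : Type*} {parent : V → V} {a b : V → ℝ}
    (h : EncodesAncestors parent Set.univ a b) {u v : V} (huv : OnChain parent u v) (e : V) :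
    OnChain parent u e ∧ ¬ OnChain parent v e ↔ (a v < a e ∧ a e ≤ a u) ∧ a u < b e := by
  have h' : ∀ x w, OnChain parent x w ↔ a w ≤ a x ∧ a x < b w := fun x w => h x trivial w trivial
  constructor
  · rintro ⟨hue, hve⟩
    have hev := (h' e v).1 ((hue.total huv).resolve_right hve)
    have hee := (h' e e).1 (OnChain.refl parent e)
    have hue' := (h' u e).1 hue
    refine ⟨⟨lt_of_le_of_ne hev.1 fun heq => hve ((h' v e).2 ?_), hue'.1⟩, hue'.2⟩
    rw [heq]
    exact hee
  · rintro ⟨⟨h1, h2⟩, h3⟩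
    exact ⟨(h' u e).2 ⟨h2, h3⟩, fun hve => absurd ((h' v e).1 hve).1 h1.not_ge⟩

/-- **Theorem 8.** Every rooted PTC instance can be encoded as an instance
of covering points by axis-parallel boxes in `ℝ³`: there are a point `p e ∈ ℝ³` for every
edge and an axis-parallel box (a product of three intervals) `R j ⊆ ℝ³` for every segment
such that `j` covers `e` iff `p e ∈ R j`. -/
theorem ptc_is_rectangle_cover (V ι : Type*) [Fintype V] [DecidableEq V] [Fintype ι]
    (root : V) (parent : V → V)
    (hroot : parent root = root) (hreach : ∀ w : V, OnChain parent w root)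
    (u v : ι → V) (hanc : ∀ j, OnChain parent (u j) (v j))
    (sup : ι → ℕ) (dem : {w : V // w ≠ root} → ℕ) :
    ∃ (p : {w : V // w ≠ root} → ℝ × ℝ × ℝ) (R : ι → Set (ℝ × ℝ × ℝ)),
      (∀ j : ι, ∃ I₁ I₂ I₃ : Set ℝ,
        I₁.OrdConnected ∧ I₂.OrdConnected ∧ I₃.OrdConnected ∧
        R j = I₁ ×ˢ I₂ ×ˢ I₃) ∧
      ∀ (j : ι) (e : {w : V // w ≠ root}),
        TreeCovers parent u v sup dem j e ↔ p e ∈ R j := by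
  obtain ⟨a, b, hab⟩ := exists_ancestor_intervals hroot hreach
  refine ⟨fun e => (a e.1, b e.1, (dem e : ℝ)), fun j =>
    Set.Ioc (a (v j)) (a (u j)) ×ˢ Set.Ioi (a (u j)) ×ˢ Set.Iic (sup j : ℝ),
    fun j => ⟨_, _, _, Set.ordConnected_Ioc, Set.ordConnected_Ioi, Set.ordConnected_Iic, rfl⟩, ?_⟩
  intro j e
  rw [TreeCovers, ← and_assoc, hab.onPath_iff (hanc j)]
  simp only [Set.mem_prod, Set.mem_Ioc, Set.mem_Ioi, Set.mem_Iic, Nat.cast_le, and_assoc]
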